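/- There exists a 39×39 matrix with all entries equal to 1 or -1 whose determinant equals 2^38 · 9^17 · 1241. Consequently md(39) ≥ 2^38 · 9^17 · 1241. -/

import Mathlib

/-- `md n` is the maximal determinant of an `n × n` matrix all of whose
entries are `1` or `-1`. -/
noncomputable def md (n : ℕ) : ℤ :=
  sSup {d : ℤ | ∃ M : Matrix (Fin n) (Fin n) ℤ,
    (∀ i j, M i j = 1 ∨ M i j = -1) ∧ M.det = d}

/-!
The rows of a suitable sign matrix `M` of order 39 fall into blocks of sizes 9, 10, 10, 9 and 1.
Up to a correction in the last row and column, the Gram matrix `M * Mᵀ` has diagonal 39, entries 3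
inside the blocks and entries -1 between them, so it is `36 • 1` plus a matrix of rank at most 6.
The Weinstein–Aronszajn identity reduces `det (M * Mᵀ) = (det M) ^ 2` to a determinant of order 6,
and negating a row of `M` if necessary makes `det M` positive.
-/

open Matrix

section SmulOneAddMul

variable {m n R : Type*} [Fintype m] [Fintype n] [DecidableEq m] [DecidableEq n] [CommRing R]

theorem det_smul_one_add_mul_of_card_le (h : Fintype.card n ≤ Fintype.card m)
    (A : Matrix m n R) (B : Matrix n m R) (c : R) :
    (c • (1 : Matrix m m R) + A * B).det =
      c ^ (Fintype.card m - Fintype.card n) * (c • (1 : Matrix n n R) + B * A).det := by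
  have eval_charpoly_eq := congrArg (Polynomial.eval c) (charpoly_mul_comm_of_le (-A) B h)
  simpa only [Polynomial.eval_mul, Polynomial.eval_pow, Polynomial.eval_X, eval_charpoly,
    Matrix.neg_mul, Matrix.mul_neg, sub_neg_eq_add, scalar_apply, ← smul_one_eq_diagonal]
    using eval_charpoly_eq

end SmulOneAddMul

section SignMatrix

variable {m n : Type*}

/-- A `±1` matrix: all entries are `1` or `-1`. -/
def IsSignMatrix (M : Matrix m n ℤ) : Prop :=
  ∀ i j, M i j = 1 ∨ M i j = -1

theorem IsSignMatrix.updateRow_neg [DecidableEq m] {M : Matrix m n ℤ}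
    (hM : IsSignMatrix M) (i : m) : IsSignMatrix (M.updateRow i (-M i)) := by
  intro i' j
  obtain rfl | hi := eq_or_ne i' i
  · simpa [neg_eq_iff_eq_neg, or_comm] using hM i' j
  · simpa [hi] using hM i' j

variable [Fintype n] [DecidableEq n]

theorem IsSignMatrix.det_le_factorial {M : Matrix n n ℤ} (hM : IsSignMatrix M) :
    M.det ≤ (Fintype.card n).factorial := by
  have abs_entry_le (i j : n) : AbsoluteValue.abs (M i j) ≤ 1 := by
    rcases hM i j with h | h <;> simp [h]
  calc M.det ≤ |M.det| := le_abs_self _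
    _ ≤ (Fintype.card n).factorial := by simpa using Matrix.det_le abs_entry_le

theorem IsSignMatrix.det_le_md {k : ℕ} {M : Matrix (Fin k) (Fin k) ℤ} (hM : IsSignMatrix M) :
    M.det ≤ md k := by
  refine le_csSup ⟨(Fintype.card (Fin k)).factorial, ?_⟩ ⟨M, hM, rfl⟩
  rintro _ ⟨N, hN, rfl⟩
  exact IsSignMatrix.det_le_factorial hN

theorem IsSignMatrix.exists_det_eq_abs [Nonempty n] {M : Matrix n n ℤ} (hM : IsSignMatrix M) :
    ∃ N : Matrix n n ℤ, IsSignMatrix N ∧ N.det = |M.det| := by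
  obtain hpos | hneg := abs_choice M.det
  · exact ⟨M, hM, hpos.symm⟩
  · obtain ⟨i⟩ := ‹Nonempty n›
    refine ⟨M.updateRow i (-M i), hM.updateRow_neg i, ?_⟩
    rw [hneg, ← neg_one_smul ℤ (M i), det_updateRow_smul, updateRow_eq_self, neg_one_mul]

end SignMatrix

section RecordMatrix

/-- The rows of `recordMatrix`, written as 39-digit decimal numerals with leading zeros: from left
to right, the digit `1` stands for the entry `1` and `0` for the entry `-1`. -/
def recordRows : Fin 39 → ℕ :=
  ![111111111111111110000000000000000000000,
    111111110000000001111111110000000000000,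
    111110001110000001110000001111110000000,
    111001101001100001001100001110001110000,
    100111001101100001100011001000001001110,
    110101011010011001001010101101000101100,
    100110011001110101011101000101100100010,
    010111011011000011000101010111001001001,
    011101011101000011001110000001110010110,
    100100100110010011010100010010000111110,
    001101111000010000010000011000111101011,
    010110101000001100101100000010010101111,
    000011101100011011101000110011101100010,
    110000101001010111110010010001011100101,
    111100001000011101000001110010101010111,
    010100110001111001110000100011011011010,
    100110101001001010011000110100111011100,
    001101100001010111100001100110110101100,
    100001111000001111110010000110100011011,
    001011000011111001011010010110010000111,
    101100000001111010101110011011100001001,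
    101010110000011010000111001111011000110,
    101011001101011000010111100011010111001,
    101000011111010100101110110110011001010,
    110011100011010100001011011011110011010,
    111010110101100000000010110111100101111,
    111001100111011000111101000101101001111,
    111010010101011011101001011100010111011,
    111101000100101110011011010111011101010,
    011010000011001111010110101000101101010,
    011011001000110110110100111101000011110,
    110111000010110010100110100100111110011,
    011010011010110010111011000010101111100,
    101011010010101101100100010001111111100,
    110001011011101010110101111010110100110,
    101111010011000110111000101011001110111,
    110011010100110111011100101010111001101,
    010111010101011100110110011110101110100,
    111111111111111111111111111111111111111]

/-- A sign matrix of order 39 whose determinant is `2 ^ 38 * 9 ^ 17 * 1241` up to sign. -/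
def recordMatrix : Matrix (Fin 39) (Fin 39) ℤ :=
  of fun i j => if recordRows i / 10 ^ (j.rev : ℕ) % 10 = 1 then 1 else -1

/-- The block of each row of `recordMatrix`: two rows have inner product `3` inside a block and `-1`
across blocks, up to the correction `rowDefect` for the all-ones last row, which is a block of its
own. -/
def rowBlock (i : Fin 39) : Fin 5 :=
  if i < 9 then 0 else if i < 19 then 1 else if i < 29 then 2 else if i < 38 then 3 else 4

/-- The inner product of row `i < 38` of `recordMatrix` with the last row is
`-1 + 4 * rowDefect i`. -/
def rowDefect : Fin 39 → ℤ :=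
  ![-1, -1, -1, -1, -1, 0, 0, 0, 0,
    -1, -1, -1, 0, 0, 0, 0, 0, 0, 0,
    0, 0, 0, 1, 1, 1, 1, 2, 2, 2,
    0, 1, 1, 1, 1, 2, 2, 2, 2,
    0]

/-- The matrix whose columns are the indicator vectors of the five blocks, followed by
`rowDefect`. -/
def gramFactor : Matrix (Fin 39) (Fin 6) ℤ :=
  of fun i => Fin.snoc (Pi.single (rowBlock i) 1) (rowDefect i)

/-- The bilinear form that, in terms of the columns of `gramFactor`, gives the deviation of the Gram
matrix of `recordMatrix` from `36 • 1`. -/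
def gramForm : Matrix (Fin 6) (Fin 6) ℤ :=
  !![ 3, -1, -1, -1, -1, 0;
     -1,  3, -1, -1, -1, 0;
     -1, -1,  3, -1, -1, 0;
     -1, -1, -1,  3, -1, 0;
     -1, -1, -1, -1,  3, 4;
      0,  0,  0,  0,  4, 0]

theorem isSignMatrix_recordMatrix : IsSignMatrix recordMatrix :=
  fun _ _ => ite_eq_or_eq _ _ _

theorem recordMatrix_mul_transpose :
    recordMatrix * recordMatrixᵀ =
      (36 : ℤ) • (1 : Matrix (Fin 39) (Fin 39) ℤ) + gramFactor * (gramForm * gramFactorᵀ) := by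
  decide +kernel

theorem transpose_gramFactor_mul_gramFactor :
    gramFactorᵀ * gramFactor =
      !![ 9,  0,  0,  0, 0, -5;
          0, 10,  0,  0, 0, -3;
          0,  0, 10,  0, 0, 10;
          0,  0,  0,  9, 0, 12;
          0,  0,  0,  0, 1,  0;
         -5, -3, 10, 12, 0, 44] := by
  decide +kernel

theorem det_smul_one_add_gramForm_mul :
    ((36 : ℤ) • (1 : Matrix (Fin 6) (Fin 6) ℤ) + gramForm * (gramFactorᵀ * gramFactor)).det =
      36 * (2 ^ 4 * 1241) ^ 2 := by
  rw [transpose_gramFactor_mul_gramFactor]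
  decide +kernel

theorem det_recordMatrix_sq : recordMatrix.det ^ 2 = (2 ^ 38 * 9 ^ 17 * 1241) ^ 2 := by
  calc recordMatrix.det ^ 2 = (recordMatrix * recordMatrixᵀ).det := by
        rw [det_mul, det_transpose, sq]
    _ = 36 ^ (39 - 6) * ((36 : ℤ) • (1 : Matrix (Fin 6) (Fin 6) ℤ) +
          gramForm * (gramFactorᵀ * gramFactor)).det := by
        rw [recordMatrix_mul_transpose, det_smul_one_add_mul_of_card_le (by simp),
          Matrix.mul_assoc, Fintype.card_fin, Fintype.card_fin]
    _ = (2 ^ 38 * 9 ^ 17 * 1241) ^ 2 := by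
        rw [det_smul_one_add_gramForm_mul]
        norm_num

end RecordMatrix

theorem stmt_8 :
    (∃ M : Matrix (Fin 39) (Fin 39) ℤ,
      (∀ i j, M i j = 1 ∨ M i j = -1) ∧ M.det = 2^38 * 9^17 * 1241) ∧
    (2^38 * 9^17 * 1241 : ℤ) ≤ md 39 := by
  obtain ⟨M, hM, hdet⟩ := isSignMatrix_recordMatrix.exists_det_eq_abs
  have hrecord : M.det = 2^38 * 9^17 * 1241 := by
    rw [hdet, (sq_eq_sq_iff_abs_eq_abs _ _).mp det_recordMatrix_sq, abs_of_nonneg (by positivity)]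
  exact ⟨⟨M, hM, hrecord⟩, hrecord ▸ hM.det_le_md⟩
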